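/- Let Cₙ be the cycle of order n ≥ 6 with two disjoint copies G₁ (vertices u₁,…,uₙ) and G₂ (vertices v₁,…,vₙ), and let f₀ : V(G₁) → V(G₂) be the constant function f₀(uᵢ) = v₁ for all i. If S is a minimum resolving set of C(Cₙ, f₀), then there is at most one vertex u of G₁ with u ∉ N[S], where N[S] denotes the closed neighborhood of S in C(Cₙ, f₀). -/

import Mathlib

/-- The functigraph `C(G, f)`: two disjoint copies of `G` (as `Sum.inl`/`Sum.inr`),
with an edge from each `Sum.inl u` to `Sum.inr (f u)`. -/
def functigraph {V : Type*} (G : SimpleGraph V) (f : V → V) : SimpleGraph (V ⊕ V) :=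
  SimpleGraph.fromRel (fun x y =>
    match x, y with
    | Sum.inl a, Sum.inl b => G.Adj a b
    | Sum.inr a, Sum.inr b => G.Adj a b
    | Sum.inl a, Sum.inr b => f a = b
    | Sum.inr _, Sum.inl _ => False)

/-- `S` is a resolving set of `H`: every pair of distinct vertices is resolved by some `w ∈ S`. -/
def IsResolving {V : Type*} (H : SimpleGraph V) (S : Set V) : Prop :=
  ∀ x y : V, x ≠ y → ∃ w ∈ S, H.dist x w ≠ H.dist y w

/-- The metric dimension of `H`: minimum cardinality of a (finite) resolving set. -/
noncomputable def metricDim {V : Type*} (H : SimpleGraph V) : ℕ :=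
  sInf {k | ∃ S : Set V, IsResolving H S ∧ S.Finite ∧ S.ncard = k}

/-- The cycle graph on `ZMod n` (for `n ≥ 3`): `i` is adjacent to `i ± 1`. -/
def cycGraph (n : ℕ) : SimpleGraph (ZMod n) :=
  SimpleGraph.fromRel (fun i j => j = i + 1)

/-- The closed neighborhood `N[S]` of a set `S` in `H`. -/
def closedNbhd {V : Type*} (H : SimpleGraph V) (S : Set V) : Set V :=
  S ∪ {x | ∃ s ∈ S, H.Adj x s}

/-!
All vertices of the first copy are adjacent to the single vertex `inr c`, and every walk from the
first copy to the second passes through `inr c`. Hence a vertex of the second copy is equidistant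
from all vertices of the first copy, and a vertex `inl s` is at distance exactly 2 from every
`inl a` outside its closed neighborhood. No element of `S` therefore separates two vertices of the
first copy lying outside `N[S]`. Distances are compared in `ℕ∞`, since `dist` takes the
junk value `0` between different components.
-/

section Functigraph

variable {V : Type*} {G : SimpleGraph V} {f : V → V}

theorem functigraph_adj_inl_inl {a b : V} :
    (functigraph G f).Adj (Sum.inl a) (Sum.inl b) ↔ G.Adj a b := by
  simpa [functigraph, G.adj_comm b a] using G.ne_of_adj

theorem functigraph_adj_inl_inr {a b : V} :
    (functigraph G f).Adj (Sum.inl a) (Sum.inr b) ↔ f a = b := by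
  simp [functigraph]

theorem exists_inr_apply_mem_support {a v : V}
    (p : (functigraph G f).Walk (Sum.inl a) (Sum.inr v)) : ∃ u, Sum.inr (f u) ∈ p.support := by
  obtain ⟨⟨⟨x, y⟩, hxy⟩, hd, ⟨u, rfl⟩, hy⟩ :=
    p.exists_boundary_dart (Set.range Sum.inl) (Set.mem_range_self a) (by simp)
  rcases y with b | b
  · exact absurd (Set.mem_range_self b) hy
  · refine ⟨u, ?_⟩
    rw [functigraph_adj_inl_inr.mp hxy]
    exact p.dart_snd_mem_support_of_mem_darts hd

theorem functigraph_edist_inl_inl_eq_two {a b : V} (hne : a ≠ b) (hadj : ¬G.Adj a b)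
    (hf : f a = f b) : (functigraph G f).edist (Sum.inl a) (Sum.inl b) = 2 := by
  have hcommon : Sum.inr (f b) ∈ (functigraph G f).commonNeighbors (Sum.inl a) (Sum.inl b) :=
    SimpleGraph.mem_commonNeighbors _ |>.mpr
      ⟨functigraph_adj_inl_inr.mpr hf, functigraph_adj_inl_inr.mpr rfl⟩
  exact SimpleGraph.edist_eq_two_iff.mpr
    ⟨Sum.inl_injective.ne hne, mt functigraph_adj_inl_inl.mp hadj, _, hcommon⟩

theorem functigraph_const_edist_inl_inr (c a v : V) :
    (functigraph G fun _ ↦ c).edist (Sum.inl a) (Sum.inr v) =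
      1 + (functigraph G fun _ ↦ c).edist (Sum.inr c) (Sum.inr v) := by
  classical
  apply le_antisymm
  · have hac : (functigraph G fun _ ↦ c).edist (Sum.inl a) (Sum.inr c) = 1 :=
      SimpleGraph.edist_eq_one_iff_adj.mpr (functigraph_adj_inl_inr.mpr rfl)
    exact hac ▸ SimpleGraph.edist_triangle
  · refine le_iInf fun p ↦ ?_
    obtain ⟨-, hc⟩ := exists_inr_apply_mem_support p
    calc 1 + (functigraph G fun _ ↦ c).edist (Sum.inr c) (Sum.inr v)
        ≤ 1 + ((p.dropUntil _ hc).length : ℕ∞) := by gcongr; exact SimpleGraph.edist_le _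
      _ ≤ p.length := by
        have hlt := SimpleGraph.Walk.length_dropUntil_lt_length hc Sum.inr_ne_inl
        exact_mod_cast Nat.one_add_le_iff.mpr hlt

end Functigraph

theorem notMem_closedNbhd_iff {V : Type*} {H : SimpleGraph V} {S : Set V} {x : V} :
    x ∉ closedNbhd H S ↔ ∀ w ∈ S, x ≠ w ∧ ¬H.Adj x w := by
  simp only [closedNbhd, Set.mem_union, Set.mem_ofPred_eq]
  grind

theorem stmt9_general {V : Type*} (G : SimpleGraph V) (c : V) {S : Set (V ⊕ V)}
    (hres : IsResolving (functigraph G fun _ ↦ c) S) :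
    {u : V | Sum.inl u ∉ closedNbhd (functigraph G fun _ ↦ c) S}.Subsingleton := by
  intro a ha b hb
  by_contra hab
  obtain ⟨w, hwS, hw⟩ := hres _ _ (Sum.inl_injective.ne hab)
  refine hw (congrArg ENat.toNat ?_)
  rcases w with s | v
  · have edist_eq_two {u : V} (hu : Sum.inl u ∉ closedNbhd (functigraph G fun _ ↦ c) S) :
        (functigraph G fun _ ↦ c).edist (Sum.inl u) (Sum.inl s) = 2 := by
      obtain ⟨hne, hadj⟩ := notMem_closedNbhd_iff.mp hu _ hwS
      exact functigraph_edist_inl_inl_eq_two (ne_of_apply_ne _ hne)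
        (mt functigraph_adj_inl_inl.mpr hadj) rfl
    rw [edist_eq_two ha, edist_eq_two hb]
  · rw [functigraph_const_edist_inl_inr, functigraph_const_edist_inl_inr]

theorem stmt9 (n : ℕ) (hn : 6 <= n) (S : Set (ZMod n ⊕ ZMod n))
    (hres : IsResolving (functigraph (cycGraph n) (fun _ => (0 : ZMod n))) S)
    (hfin : S.Finite)
    (hmin : S.ncard = metricDim (functigraph (cycGraph n) (fun _ => (0 : ZMod n)))) :
    {u : ZMod n |
      Sum.inl u ∉ closedNbhd (functigraph (cycGraph n) (fun _ => (0 : ZMod n))) S}.Subsingleton :=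
  stmt9_general (cycGraph n) 0 hres
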